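/- Let K ≥ 1 and let A be a nonempty subset of F_2^n satisfying |A + A| ≤ K·|A|. Then for every real ε > 0, every positive integer t, and every set B ⊆ F_2^n there exists a set X ⊆ F_2^n with the following properties: (1) X is contained in an affine shift of A, i.e. there exists c ∈ F_2^n with X ⊆ c + A; (2) |X| ≥ |A|/(2·K^{t−1}); (3) for every x ∈ X and every nonempty subset S ⊆ F_2^n, Pr_{y∈S}[ ρ_{A→B}(y) − ρ_{A→B}(y + x) ≤ 2ε·√(ρ_{A→B}(y)) ] ≥ 1 − 8·(|A+B|/|S|)·exp(−ε²t/4). -/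

import Mathlib

open scoped Classical Pointwise

/-- The measure of additive containment: `ρ_{A→B}(y) = |{a ∈ A : y + a ∈ B}| / |A|`. -/
noncomputable def rhoMeas {n : ℕ} (A B : Finset (Fin n → ZMod 2)) (y : Fin n → ZMod 2) : ℝ :=
  ((A.filter fun a => y + a ∈ B).card : ℝ) / A.card

/-- `Pr_{y ∈ S}[P y] = |{y ∈ S : P y}| / |S|`. -/
noncomputable def prOver {n : ℕ} (S : Finset (Fin n → ZMod 2))
    (P : (Fin n → ZMod 2) → Prop) : ℝ :=
  ((S.filter fun y => P y).card : ℝ) / S.card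

/-!
Draw a tuple `g ∈ A ^ t` at random and estimate `ρ(y)` by the fraction of the `i` with
`y + g i ∈ B`. By Chernoff's bound the estimate is accurate for each fixed `y` with high
probability, so at least half of the tuples are *good*: their exceptional set, where the estimate
fails, is small. The map `g ↦ (-g 0 + g i)_{i ≠ 0}` takes at most `|-A + A| ^ (t - 1)` values and
its fibres consist of left translates of one another, so by pigeonhole some good tuple `g` has many
good translates `x + g`. The estimate of `ρ(y)` by `x + g` is the estimate of `ρ(y + x)` by `g`;
when neither `y` is exceptional for `x + g` nor `y + x` for `g`, it ties `ρ(y)` to `ρ(y + x)`.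
-/

section UniformProb

open Finset

open Fintype (piFinset)

variable {α ι : Type*} {s : Finset α} {p q : α → Prop} [DecidablePred p] [DecidablePred q]

/-- The probability that a uniformly random element of `s` satisfies `p`. It serves for the measure
of containment, for its estimate along a tuple, and for events on tuples alike. For empty `s` its
value is `0`. -/
noncomputable def uniformProb (s : Finset α) (p : α → Prop) [DecidablePred p] : ℝ :=
  #{a ∈ s | p a} / #s

lemma uniformProb_nonneg : 0 ≤ uniformProb s p := by
  unfold uniformProb; positivity

lemma card_mul_uniformProb (s : Finset α) (p : α → Prop) [DecidablePred p] :
    #s * uniformProb s p = #{a ∈ s | p a} := by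
  rcases s.eq_empty_or_nonempty with rfl | hs
  · simp
  · exact mul_div_cancel₀ _ (by exact_mod_cast hs.card_ne_zero)

lemma exists_of_uniformProb_pos (h : 0 < uniformProb s p) : ∃ a ∈ s, p a := by
  contrapose! h
  simp [uniformProb, filter_false_of_mem h]

lemma uniformProb_mono (h : ∀ a ∈ s, p a → q a) : uniformProb s p ≤ uniformProb s q := by
  unfold uniformProb
  gcongr
  exact fun ha ↦ h _ ‹_› ha

lemma uniformProb_or_le :
    uniformProb s (fun a ↦ p a ∨ q a) ≤ uniformProb s p + uniformProb s q := by
  unfold uniformProb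
  rw [← add_div, filter_or]
  gcongr
  exact_mod_cast card_union_le _ _

lemma one_sub_le_uniformProb (hs : s.Nonempty) {M : ℝ} (h : #{a ∈ s | ¬ p a} ≤ M) :
    1 - M / #s ≤ uniformProb s p := by
  have hs' : (0 : ℝ) < #s := by exact_mod_cast hs.card_pos
  have hsplit : (#{a ∈ s | p a} + #{a ∈ s | ¬ p a} : ℝ) = #s := by
    exact_mod_cast card_filter_add_card_filter_not p
  rw [uniformProb, one_sub_div hs'.ne']
  gcongr
  linarith

lemma card_div_two_le_card_filter_le_two_mul {f : α → ℝ} {M : ℝ} (hf : ∀ a ∈ s, 0 ≤ f a)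
    (h : ∑ a ∈ s, f a ≤ #s * M) : (#s : ℝ) / 2 ≤ #{a ∈ s | f a ≤ 2 * M} := by
  by_contra! hlt
  have hsplit : (#{a ∈ s | f a ≤ 2 * M} + #{a ∈ s | ¬ f a ≤ 2 * M} : ℝ) = #s := by
    exact_mod_cast card_filter_add_card_filter_not (s := s) (f · ≤ 2 * M)
  have hs : (0 : ℝ) < #s := by
    linarith [Nat.cast_nonneg (α := ℝ) #{a ∈ s | f a ≤ 2 * M}]
  have hM : 0 ≤ M := nonneg_of_mul_nonneg_right ((sum_nonneg hf).trans h) hs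
  have hlarge : {a ∈ s | ¬ f a ≤ 2 * M}.Nonempty := by
    rw [← card_pos, ← Nat.cast_pos (α := ℝ)]
    linarith
  have : #{a ∈ s | ¬ f a ≤ 2 * M} * (2 * M) < ∑ a ∈ s, f a :=
    calc #{a ∈ s | ¬ f a ≤ 2 * M} * (2 * M)
        = ∑ a ∈ s with ¬ f a ≤ 2 * M, 2 * M := by rw [sum_const, nsmul_eq_mul]
      _ < ∑ a ∈ s with ¬ f a ≤ 2 * M, f a :=
        sum_lt_sum_of_nonempty hlarge fun a ha ↦ not_le.1 (mem_filter.1 ha).2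
      _ ≤ ∑ a ∈ s, f a :=
        sum_le_sum_of_subset_of_nonneg (filter_subset _ _) fun a ha _ ↦ hf a ha
  nlinarith

lemma uniformProb_le_exp_neg_mul_sum_exp (s : Finset α) (f : α → ℝ) (c : ℝ) :
    uniformProb s (fun a ↦ c ≤ f a) ≤ Real.exp (-c) * (∑ a ∈ s, Real.exp (f a)) / #s := by
  unfold uniformProb
  gcongr
  rw [Real.exp_neg, inv_mul_eq_div, le_div_iff₀ (Real.exp_pos c), ← nsmul_eq_mul]
  calc #{a ∈ s | c ≤ f a} • Real.exp c
      ≤ ∑ a ∈ s with c ≤ f a, Real.exp (f a) :=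
        card_nsmul_le_sum _ _ _ fun a ha ↦ Real.exp_le_exp.2 (mem_filter.1 ha).2
    _ ≤ ∑ a ∈ s, Real.exp (f a) :=
        sum_le_sum_of_subset_of_nonneg (filter_subset _ _) fun _ _ _ ↦ (Real.exp_pos _).le

section Chernoff

variable (s p)

lemma sum_exp_ite_le {l : ℝ} (hl : |l| ≤ 1) :
    ∑ a ∈ s, Real.exp (if p a then l else 0) ≤
      #s * Real.exp (uniformProb s p * (l + l ^ 2)) := by
  have hexp : Real.exp l ≤ 1 + (l + l ^ 2) := by
    linarith [(abs_le.1 (Real.abs_exp_sub_one_sub_id_le hl)).2]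
  calc ∑ a ∈ s, Real.exp (if p a then l else 0)
      ≤ ∑ a ∈ s, (1 + if p a then l + l ^ 2 else 0) := by
        gcongr with a
        split_ifs <;> simp [hexp]
    _ = #s * (uniformProb s p * (l + l ^ 2) + 1) := by
        rw [sum_add_distrib, ← sum_filter, sum_const, sum_const, nsmul_eq_mul, nsmul_eq_mul,
          ← card_mul_uniformProb s p]
        ring
    _ ≤ #s * Real.exp (uniformProb s p * (l + l ^ 2)) := by
        gcongr
        exact Real.add_one_le_exp _

variable [Fintype ι] [DecidableEq ι]

lemma sum_piFinset_exp_mul_uniformProb (l : ℝ) :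
    ∑ g ∈ piFinset (fun _ : ι ↦ s),
        Real.exp (l * (Fintype.card ι * uniformProb univ fun i ↦ p (g i))) =
      (∑ a ∈ s, Real.exp (if p a then l else 0)) ^ Fintype.card ι := by
  rw [← Finset.card_univ, ← prod_const, prod_univ_sum]
  refine sum_congr rfl fun g _ ↦ ?_
  rw [card_mul_uniformProb, ← Real.exp_sum, ← sum_filter, sum_const, nsmul_eq_mul, mul_comm]

lemma uniformProb_piFinset_le_exp {l : ℝ} (hl : |l| ≤ 1) (c : ℝ) :
    uniformProb (piFinset fun _ : ι ↦ s) (fun g ↦ c ≤ l * uniformProb univ fun i ↦ p (g i)) ≤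
      Real.exp (Fintype.card ι * (uniformProb s p * (l + l ^ 2) - c)) := by
  set t : ℝ := ↑(Fintype.card ι) with ht
  calc uniformProb (piFinset fun _ : ι ↦ s) (fun g ↦ c ≤ l * uniformProb univ fun i ↦ p (g i))
      ≤ uniformProb (piFinset fun _ : ι ↦ s)
          (fun g ↦ t * c ≤ l * (t * uniformProb univ fun i ↦ p (g i))) :=
        uniformProb_mono fun g _ hg ↦ by
          rw [mul_left_comm]
          exact mul_le_mul_of_nonneg_left hg (Nat.cast_nonneg _)
    _ ≤ Real.exp (-(t * c)) * (∑ a ∈ s, Real.exp (if p a then l else 0)) ^ Fintype.card ι /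
          (#s : ℝ) ^ Fintype.card ι := by
        grw [uniformProb_le_exp_neg_mul_sum_exp, sum_piFinset_exp_mul_uniformProb]
        simp
    _ ≤ Real.exp (-(t * c)) * (#s * Real.exp (uniformProb s p * (l + l ^ 2))) ^ Fintype.card ι /
          (#s : ℝ) ^ Fintype.card ι := by
        grw [sum_exp_ite_le s p hl]
    _ ≤ Real.exp (t * (uniformProb s p * (l + l ^ 2) - c)) := by
        rw [mul_pow, ← Real.exp_nat_mul, mul_left_comm, ← Real.exp_add]
        refine div_le_of_le_mul₀ (by positivity) (by positivity) (le_of_eq ?_)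
        rw [← ht]
        ring_nf

/-- For `δ > 0` this bounds the upper tail `μ + δ * r ≤ mean`, for `δ < 0` the lower tail. -/
lemma uniformProb_piFinset_deviation_le {δ r : ℝ} (hr : 0 < r) (hδ : |δ| ≤ 2 * r)
    (hs : uniformProb s p ≤ r ^ 2) :
    uniformProb (piFinset fun _ : ι ↦ s)
        (fun g ↦ δ ^ 2 * r ≤ δ * ((uniformProb univ fun i ↦ p (g i)) - uniformProb s p)) ≤
      Real.exp (-(δ ^ 2 * Fintype.card ι) / 4) := by
  set μ := uniformProb s p
  -- the minimizer of `r ^ 2 * l ^ 2 - l * δ * r`, which bounds the exponent since `μ ≤ r ^ 2`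
  set l := δ / (2 * r) with hl
  have hl1 : |l| ≤ 1 := by
    rwa [hl, abs_div, abs_of_pos (by positivity : 0 < 2 * r), div_le_one (by positivity)]
  have hδl : δ = 2 * r * l := by rw [hl]; field_simp
  calc uniformProb (piFinset fun _ : ι ↦ s)
        (fun g ↦ δ ^ 2 * r ≤ δ * ((uniformProb univ fun i ↦ p (g i)) - μ))
      ≤ uniformProb (piFinset fun _ : ι ↦ s)
        (fun g ↦ l * (μ + δ * r) ≤ l * uniformProb univ fun i ↦ p (g i)) :=
        uniformProb_mono fun g _ hg ↦ by
          refine le_of_mul_le_mul_left ?_ (by positivity : 0 < 2 * r)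
          rw [← mul_assoc, ← mul_assoc, ← hδl]
          linarith
    _ ≤ Real.exp (Fintype.card ι * (μ * (l + l ^ 2) - l * (μ + δ * r))) :=
        uniformProb_piFinset_le_exp s p hl1 _
    _ ≤ Real.exp (-(δ ^ 2 * Fintype.card ι) / 4) := by
        have : μ * l ^ 2 ≤ r ^ 2 * l ^ 2 := by gcongr
        have : μ * (l + l ^ 2) - l * (μ + δ * r) ≤ -δ ^ 2 / 4 := by rw [hδl]; linarith
        rw [Real.exp_le_exp, mul_comm (δ ^ 2), ← mul_neg, mul_div_assoc]
        gcongr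

lemma uniformProb_piFinset_lower_tail {ε : ℝ} (hε : 0 ≤ ε) :
    uniformProb (piFinset fun _ : ι ↦ s)
        (fun g ↦ (uniformProb univ fun i ↦ p (g i)) + ε * √(uniformProb s p) < uniformProb s p) ≤
      Real.exp (-(ε ^ 2 * Fintype.card ι) / 4) := by
  set μ := uniformProb s p
  have hμ : √μ ^ 2 = μ := Real.sq_sqrt uniformProb_nonneg
  rcases le_or_gt (√μ) ε with hle | hlt
  · refine le_of_not_gt fun hpos ↦ ?_
    obtain ⟨g, -, hg⟩ := exists_of_uniformProb_pos ((Real.exp_pos _).trans hpos)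
    have : 0 ≤ uniformProb univ fun i ↦ p (g i) := uniformProb_nonneg
    nlinarith [Real.sqrt_nonneg μ]
  · have hδ : |-ε| ≤ 2 * √μ := by rw [abs_neg, abs_of_nonneg hε]; linarith
    rw [← neg_sq ε]
    refine le_trans (uniformProb_mono fun g _ hg ↦ ?_)
      (uniformProb_piFinset_deviation_le s p (hε.trans_lt hlt) hδ hμ.ge)
    nlinarith

lemma uniformProb_piFinset_upper_tail {ε r : ℝ} (hε : 0 ≤ ε) (hr : 0 < r)
    (hεr : ε ≤ 2 * r) (hs : uniformProb s p ≤ r ^ 2) :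
    uniformProb (piFinset fun _ : ι ↦ s)
        (fun g ↦ uniformProb s p + ε * r ≤ uniformProb univ fun i ↦ p (g i)) ≤
      Real.exp (-(ε ^ 2 * Fintype.card ι) / 4) := by
  refine le_trans (uniformProb_mono fun g _ hg ↦ ?_)
    (uniformProb_piFinset_deviation_le s p hr (by rwa [abs_of_nonneg hε]) hs)
  nlinarith

end Chernoff

end UniformProb

section Translates

open Finset

open Fintype (piFinset)

variable {G ι : Type*} [AddGroup G] [DecidableEq G] [Fintype ι]

/-- The elements `x` of `A - g i₀` for which the left translate `x + g` of the tuple `g` lies in the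
family `𝒢`. Membership in `A - g i₀` is automatic for `𝒢 ⊆ A ^ ι`, and makes this a finite set. -/
noncomputable def translators (A : Finset G) (𝒢 : Finset (ι → G)) (i₀ : ι) (g : ι → G) : Finset G :=
  {x ∈ A.image (· + -g i₀) | (fun i ↦ x + g i) ∈ 𝒢}

variable [DecidableEq ι] {A : Finset G} {𝒢 : Finset (ι → G)}

lemma card_filter_eq_neg_add_le_card_translators (h𝒢 : 𝒢 ⊆ piFinset fun _ ↦ A) (i₀ : ι)
    (g : ι → G) :
    #{g' ∈ 𝒢 | ∀ i, -g' i₀ + g' i = -g i₀ + g i} ≤ #(translators A 𝒢 i₀ g) := by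
  have htranslate : ∀ g' ∈ 𝒢.filter fun g' ↦ ∀ i, -g' i₀ + g' i = -g i₀ + g i,
      (fun i ↦ g' i₀ + -g i₀ + g i) = g' := fun g' hg' ↦ by
    ext i
    rw [add_assoc, ← (mem_filter.1 hg').2 i, add_neg_cancel_left]
  refine card_le_card_of_injOn (fun g' ↦ g' i₀ + -g i₀) (fun g' hg' ↦ ?_) fun g₁ h₁ g₂ h₂ h ↦ ?_
  · have hg'𝒢 := (mem_filter.1 hg').1
    refine mem_filter.2 ⟨mem_image_of_mem _ (Fintype.mem_piFinset.1 (h𝒢 hg'𝒢) i₀), ?_⟩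
    rwa [htranslate g' hg']
  · rw [← htranslate g₁ h₁, ← htranslate g₂ h₂]
    simp only at h
    rw [h]

lemma exists_card_le_card_translators_mul (h𝒢 : 𝒢 ⊆ piFinset fun _ ↦ A) (hne : 𝒢.Nonempty)
    (i₀ : ι) : ∃ g ∈ 𝒢, #𝒢 ≤ #(translators A 𝒢 i₀ g) * #(-A + A) ^ (Fintype.card ι - 1) := by
  obtain ⟨g, hg, hmax⟩ := exists_max_image 𝒢 (fun g ↦ #(translators A 𝒢 i₀ g)) hne
  let increments : (ι → G) → {i // i ≠ i₀} → G := fun g i ↦ -g i₀ + g i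
  have hmaps : ∀ g ∈ 𝒢, increments g ∈ piFinset fun _ ↦ -A + A := fun g hg ↦ by
    have hgA := Fintype.mem_piFinset.1 (h𝒢 hg)
    exact Fintype.mem_piFinset.2 fun i ↦ add_mem_add (neg_mem_neg (hgA i₀)) (hgA i)
  have hfibre : ∀ φ ∈ piFinset fun _ ↦ -A + A,
      #{g' ∈ 𝒢 | increments g' = φ} ≤ #(translators A 𝒢 i₀ g) := fun φ _ ↦ by
    rcases {g' ∈ 𝒢 | increments g' = φ}.eq_empty_or_nonempty with hempty | ⟨g₁, hg₁⟩
    · simp [hempty]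
    obtain ⟨hg₁𝒢, rfl⟩ := mem_filter.1 hg₁
    refine le_trans (card_le_card ?_) <|
      (card_filter_eq_neg_add_le_card_translators h𝒢 i₀ g₁).trans (hmax g₁ hg₁𝒢)
    refine monotone_filter_right _ fun g' _ hg' i ↦ ?_
    by_cases hi : i = i₀
    · simp [hi]
    · exact congrFun hg' ⟨i, hi⟩
  refine ⟨g, hg, (card_le_mul_card_image_of_maps_to hmaps _ hfibre).trans_eq ?_⟩
  simp

lemma exists_card_div_le_card_translators {K : ℝ} (hA : A.Nonempty) (hK : #(-A + A) ≤ K * #A)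
    (h𝒢 : 𝒢 ⊆ piFinset fun _ ↦ A) (hhalf : (#A : ℝ) ^ Fintype.card ι / 2 ≤ #𝒢) (i₀ : ι) :
    ∃ g ∈ 𝒢, #A / (2 * K ^ (Fintype.card ι - 1)) ≤ #(translators A 𝒢 i₀ g) := by
  have hA' : (0 : ℝ) < #A := by exact_mod_cast hA.card_pos
  have hK' : 0 < K :=
    pos_of_mul_pos_left (lt_of_lt_of_le (by exact_mod_cast (hA.neg.add hA).card_pos) hK) hA'.le
  have hne : 𝒢.Nonempty := by
    rw [← card_pos, ← Nat.cast_pos (α := ℝ)]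
    exact lt_of_lt_of_le (by positivity) hhalf
  obtain ⟨g, hg, hcard⟩ := exists_card_le_card_translators_mul h𝒢 hne i₀
  refine ⟨g, hg, ?_⟩
  have hι : Fintype.card ι ≠ 0 := (Fintype.card_pos_iff.2 ⟨i₀⟩).ne'
  set m := Fintype.card ι - 1 with hm
  refine le_of_mul_le_mul_right ?_ (by positivity : 0 < (K * #A) ^ m)
  calc #A / (2 * K ^ m) * (K * #A) ^ m = (#A : ℝ) ^ Fintype.card ι / 2 := by
        rw [← mul_pow_sub_one hι, ← hm, mul_pow]
        field_simp
    _ ≤ #𝒢 := hhalf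
    _ ≤ #(translators A 𝒢 i₀ g) * (#(-A + A) : ℝ) ^ m := by exact_mod_cast hcard
    _ ≤ #(translators A 𝒢 i₀ g) * (K * #A) ^ m := by gcongr

end Translates

section Containment

open Finset

open Fintype (piFinset)

variable {G ι : Type*} [AddGroup G] [DecidableEq G] [Fintype ι]
  {A B : Finset G} {ε : ℝ} {g : ι → G} {x y : G}

/-- The measure of additive containment `ρ_{A→B}(y)`, in an arbitrary group. -/
noncomputable def containment (A B : Finset G) (y : G) : ℝ :=
  uniformProb A fun a ↦ y + a ∈ B

/-- The estimate of `ρ_{A→B}(y)` along a tuple `g` of samples from `A`. -/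
noncomputable def sampleContainment (g : ι → G) (B : Finset G) (y : G) : ℝ :=
  uniformProb univ fun i ↦ y + g i ∈ B

/-- The points at which the estimate of `ρ = ρ_{A→B}` along `g` is too small or too large. The
factor `r = ε + √(ε ^ 2 + ρ)` in the second case is the positive root of `r ^ 2 - 2 * ε * r = ρ`,
that is, the value of `√ρ` at a point where `ρ - 2 * ε * √ρ` equals the present `ρ`. Outside `B - A`
both `ρ` and its estimate along a tuple from `A` vanish. -/
noncomputable def exceptionalSet (A B : Finset G) (ε : ℝ) (g : ι → G) : Finset G :=
  {y ∈ B - A | sampleContainment g B y + ε * √(containment A B y) < containment A B y ∨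
    containment A B y + ε * (ε + √(ε ^ 2 + containment A B y)) ≤ sampleContainment g B y}

lemma mem_sub_of_containment_pos (h : 0 < containment A B y) : y ∈ B - A := by
  obtain ⟨a, ha, hya⟩ := exists_of_uniformProb_pos h
  exact mem_sub.2 ⟨y + a, hya, a, ha, add_sub_cancel_right y a⟩

lemma mem_sub_of_sampleContainment_pos (hg : ∀ i, g i ∈ A) (h : 0 < sampleContainment g B y) :
    y ∈ B - A := by
  obtain ⟨i, -, hyi⟩ := exists_of_uniformProb_pos h
  exact mem_sub.2 ⟨y + g i, hyi, g i, hg i, add_sub_cancel_right y (g i)⟩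

lemma sampleContainment_translate (g : ι → G) (B : Finset G) (x y : G) :
    sampleContainment (fun i ↦ x + g i) B y = sampleContainment g B (y + x) := by
  simp only [sampleContainment, add_assoc]

lemma add_mul_add_sqrt_le_sub_mul_sqrt {ε p q : ℝ} (hε : 0 ≤ ε) (hp : 0 ≤ p) (hq : 0 ≤ q)
    (h : 2 * ε * √p < p - q) : q + ε * (ε + √(ε ^ 2 + q)) ≤ p - ε * √p := by
  obtain ⟨r, hr, rfl⟩ : ∃ r, 0 ≤ r ∧ r ^ 2 = p := ⟨√p, Real.sqrt_nonneg p, Real.sq_sqrt hp⟩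
  rw [Real.sqrt_sq hr] at *
  have hεr : 2 * ε < r := by nlinarith
  have hsqrt : √(ε ^ 2 + q) ≤ r - ε := Real.sqrt_le_iff.2 ⟨by linarith, by nlinarith⟩
  nlinarith

lemma mem_exceptionalSet_or_of_lt_containment_sub (hε : 0 < ε) (hg : ∀ i, g i ∈ A)
    (h : 2 * ε * √(containment A B y) < containment A B y - containment A B (y + x)) :
    y ∈ exceptionalSet A B ε (fun i ↦ x + g i) ∨ y + x ∈ exceptionalSet A B ε g := by
  have hp : 0 ≤ containment A B y := uniformProb_nonneg
  have hq : 0 ≤ containment A B (y + x) := uniformProb_nonneg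
  by_cases hlow : sampleContainment (fun i ↦ x + g i) B y + ε * √(containment A B y) <
      containment A B y
  · have hpos : 0 < containment A B y := by
      have : 0 ≤ 2 * ε * √(containment A B y) := by positivity
      linarith
    exact .inl (mem_filter.2 ⟨mem_sub_of_containment_pos hpos, .inl hlow⟩)
  · have hhigh : containment A B (y + x) + ε * (ε + √(ε ^ 2 + containment A B (y + x))) ≤
        sampleContainment g B (y + x) := by
      rw [sampleContainment_translate] at hlow
      linarith [add_mul_add_sqrt_le_sub_mul_sqrt hε.le hp hq h]
    have hpos : 0 < sampleContainment g B (y + x) := lt_of_lt_of_le (by positivity) hhigh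
    exact .inr (mem_filter.2 ⟨mem_sub_of_sampleContainment_pos hg hpos, .inr hhigh⟩)

lemma card_lt_containment_sub_le (hε : 0 < ε) (hg : ∀ i, g i ∈ A) (S : Finset G) (x : G) :
    #{y ∈ S | 2 * ε * √(containment A B y) < containment A B y - containment A B (y + x)} ≤
      #(exceptionalSet A B ε fun i ↦ x + g i) + #(exceptionalSet A B ε g) := by
  refine (card_le_card (t := (exceptionalSet A B ε fun i ↦ x + g i) ∪
    (exceptionalSet A B ε g).image (· + -x)) fun y hy ↦ ?_).trans
    ((card_union_le _ _).trans (Nat.add_le_add_left card_image_le _))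
  refine mem_union.2 <|
    (mem_exceptionalSet_or_of_lt_containment_sub hε hg (mem_filter.1 hy).2).imp_right fun h ↦ ?_
  exact mem_image.2 ⟨y + x, h, add_neg_cancel_right y x⟩

lemma one_sub_le_uniformProb_containment_sub_le {M : ℝ} (hε : 0 < ε) (hg : ∀ i, g i ∈ A)
    (hgood : #(exceptionalSet A B ε g) ≤ M)
    (hxgood : #(exceptionalSet A B ε fun i ↦ x + g i) ≤ M) {S : Finset G} (hS : S.Nonempty) :
    1 - 2 * M / #S ≤ uniformProb S fun y ↦
      containment A B y - containment A B (y + x) ≤ 2 * ε * √(containment A B y) := by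
  refine one_sub_le_uniformProb hS ?_
  simp only [not_le]
  calc (#{y ∈ S | 2 * ε * √(containment A B y) <
        containment A B y - containment A B (y + x)} : ℝ)
      ≤ #(exceptionalSet A B ε fun i ↦ x + g i) + #(exceptionalSet A B ε g) := by
        exact_mod_cast card_lt_containment_sub_le hε hg S x
    _ ≤ 2 * M := by linarith

variable [DecidableEq ι]

lemma uniformProb_mem_exceptionalSet_le (hε : 0 < ε) (y : G) :
    uniformProb (piFinset fun _ : ι ↦ A) (fun g ↦ y ∈ exceptionalSet A B ε g) ≤
      2 * Real.exp (-(ε ^ 2 * Fintype.card ι) / 4) := by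
  have hp : 0 ≤ containment A B y := uniformProb_nonneg
  have hr : ε ≤ √(ε ^ 2 + containment A B y) := Real.le_sqrt_of_sq_le (by linarith)
  have hr2 := Real.sq_sqrt (by positivity : 0 ≤ ε ^ 2 + containment A B y)
  rw [two_mul]
  refine (uniformProb_mono fun g _ hg ↦ (mem_filter.1 hg).2).trans (uniformProb_or_le.trans ?_)
  exact add_le_add (uniformProb_piFinset_lower_tail A (y + · ∈ B) hε.le)
    (uniformProb_piFinset_upper_tail A (y + · ∈ B) hε.le (by linarith) (by linarith)
      (show containment A B y ≤ _ by nlinarith))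

lemma sum_card_exceptionalSet_le (hε : 0 < ε) :
    ∑ g ∈ piFinset fun _ : ι ↦ A, (#(exceptionalSet A B ε g) : ℝ) ≤
      #(piFinset fun _ : ι ↦ A) * (#(B - A) * (2 * Real.exp (-(ε ^ 2 * Fintype.card ι) / 4))) := by
  set P := piFinset fun _ : ι ↦ A
  have hswap : ∑ g ∈ P, #(exceptionalSet A B ε g) =
      ∑ y ∈ B - A, #{g ∈ P | y ∈ exceptionalSet A B ε g} := by
    refine (sum_congr rfl fun g _ ↦ congrArg _ ?_).trans
      (sum_card_bipartiteAbove_eq_sum_card_bipartiteBelow fun g y ↦ y ∈ exceptionalSet A B ε g)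
    rw [bipartiteAbove, filter_mem_eq_inter, eq_comm, inter_eq_right]
    exact filter_subset _ _
  calc ∑ g ∈ P, (#(exceptionalSet A B ε g) : ℝ)
      = ∑ y ∈ B - A, #P * uniformProb P (fun g ↦ y ∈ exceptionalSet A B ε g) := by
        simp only [card_mul_uniformProb]
        exact_mod_cast hswap
    _ ≤ ∑ _y ∈ B - A, #P * (2 * Real.exp (-(ε ^ 2 * Fintype.card ι) / 4)) := by
        gcongr
        exact uniformProb_mem_exceptionalSet_le hε _
    _ = #P * (#(B - A) * (2 * Real.exp (-(ε ^ 2 * Fintype.card ι) / 4))) := by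
        rw [sum_const, nsmul_eq_mul, mul_left_comm]

lemma card_pow_div_two_le_card_filter_exceptionalSet_le (hε : 0 < ε) :
    (#A : ℝ) ^ Fintype.card ι / 2 ≤ #{g ∈ piFinset fun _ : ι ↦ A | #(exceptionalSet A B ε g) ≤
      4 * #(B - A) * Real.exp (-(ε ^ 2 * Fintype.card ι) / 4)} := by
  convert card_div_two_le_card_filter_le_two_mul
    (f := fun g ↦ (#(exceptionalSet A B ε g) : ℝ)) (fun _ _ ↦ by positivity)
    (sum_card_exceptionalSet_le (ι := ι) (A := A) (B := B) hε) using 4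
  · simp
  · ring_nf

theorem refined_almost_periodicity_of_sumsets_general {K : ℝ} (hA : A.Nonempty)
    (hK : #(-A + A) ≤ K * #A) (hε : 0 < ε) {t : ℕ} (ht : 0 < t) (B : Finset G) :
    ∃ X : Finset G, (∃ c, X ⊆ A.image (· + c)) ∧ #A / (2 * K ^ (t - 1)) ≤ #X ∧
      ∀ x ∈ X, ∀ S : Finset G, S.Nonempty →
        1 - 8 * (#(B - A) / #S) * Real.exp (-(ε ^ 2 * t) / 4) ≤
          uniformProb S fun y ↦
            containment A B y - containment A B (y + x) ≤ 2 * ε * √(containment A B y) := by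
  set 𝒢 := {g ∈ piFinset fun _ : Fin t ↦ A |
    #(exceptionalSet A B ε g) ≤ 4 * #(B - A) * Real.exp (-(ε ^ 2 * t) / 4)}
  have hhalf : (#A : ℝ) ^ Fintype.card (Fin t) / 2 ≤ #𝒢 := by
    simpa only [Fintype.card_fin] using
      card_pow_div_two_le_card_filter_exceptionalSet_le (ι := Fin t) hε
  obtain ⟨g, hg, hcard⟩ :=
    exists_card_div_le_card_translators hA hK (filter_subset _ _) hhalf ⟨0, ht⟩
  rw [Fintype.card_fin] at hcard
  refine ⟨translators A 𝒢 ⟨0, ht⟩ g, ⟨_, filter_subset _ _⟩, hcard, fun x hx S hS ↦ ?_⟩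
  obtain ⟨hgA, hgood⟩ := mem_filter.1 hg
  obtain ⟨-, hxgood⟩ := mem_filter.1 (mem_filter.1 hx).2
  calc 1 - 8 * (#(B - A) / #S) * Real.exp (-(ε ^ 2 * t) / 4)
      = 1 - 2 * (4 * #(B - A) * Real.exp (-(ε ^ 2 * t) / 4)) / #S := by ring
    _ ≤ _ := one_sub_le_uniformProb_containment_sub_le hε (Fintype.mem_piFinset.1 hgA) hgood
      hxgood hS

end Containment

theorem refined_almost_periodicity_of_sumsets {n : ℕ} (K : ℝ) (hK : 1 ≤ K)
    (A : Finset (Fin n → ZMod 2)) (hA : A.Nonempty)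
    (hdoub : ((A + A).card : ℝ) ≤ K * A.card)
    (ε : ℝ) (hε : 0 < ε) (t : ℕ) (ht : 0 < t) (B : Finset (Fin n → ZMod 2)) :
    ∃ X : Finset (Fin n → ZMod 2),
      (∃ c : Fin n → ZMod 2, X ⊆ A.image (fun a => c + a)) ∧
      (A.card : ℝ) / (2 * K ^ (t - 1)) ≤ X.card ∧
      ∀ x ∈ X, ∀ S : Finset (Fin n → ZMod 2), S.Nonempty →
        1 - 8 * (((A + B).card : ℝ) / S.card) * Real.exp (-(ε ^ 2 * t) / 4) ≤
          prOver S (fun y =>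
            rhoMeas A B y - rhoMeas A B (y + x) ≤ 2 * ε * Real.sqrt (rhoMeas A B y)) := by
  have hneg : -A = A := by ext; simp [ZModModule.neg_eq_self]
  have hsub : B - A = A + B := by rw [sub_eq_add_neg, hneg, add_comm]
  obtain ⟨X, ⟨c, hXc⟩, hX⟩ :=
    refined_almost_periodicity_of_sumsets_general hA (by rwa [hneg]) hε ht B
  exact ⟨X, ⟨c, by simpa only [add_comm c] using hXc⟩, by rwa [hsub] at hX⟩
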